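/- Let 𝒯 be a rooted tree with a distinguished leaf v_*. Then the bivariate polynomial p_{v_*}[𝒯](x,y) has the form p_{v_*}[𝒯](x,y) = a_1(x)·y + a_2(x) for polynomials a_1, a_2 ∈ ℤ[x]. Moreover, if 𝒯 has at least two leaves (equivalently, 𝒯 is not a path with the root at one end and v_* at the other), then sup_{x ∈ [0,1]} |a_1(x)| < 1; consequently the map A : C[0,1] → C[0,1], A(f)(x) = a_1(x)·f(x) + a_2(x), is a strict contraction with respect to the maximum norm. -/

import Mathlib

/-- A rooted tree: a finite tree with a distinguished root vertex, given by the (ordered)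
list of subtrees rooted at the children of the root. -/
inductive RTree : Type where
  | node : List RTree → RTree

namespace RTree

mutual
/-- The tree polynomial `p[𝒯] ∈ ℤ[x]`: `p = x` for a single vertex, and
`p[𝒯] = x (1 − ∏ᵢ (1 − p[𝒯ᵢ]))` when the subtrees rooted at the children of the root are
`𝒯₁, …, 𝒯ᵣ`. -/
noncomputable def treePoly : RTree → Polynomial ℤ
  | .node [] => Polynomial.X
  | .node (t :: ts) => Polynomial.X * (1 - prodPoly (t :: ts))
  termination_by t => sizeOf t

/-- `∏ᵢ (1 − p[𝒯ᵢ])` over a list of trees. -/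
noncomputable def prodPoly : List RTree → Polynomial ℤ
  | [] => 1
  | t :: ts => (1 - treePoly t) * prodPoly ts
  termination_by l => sizeOf l
end

mutual
/-- The set of vertex addresses of a rooted tree: a vertex is addressed by the list of
child indices on the path from the root to it (so the root has address `[]`). -/
def vertexFinset : RTree → Finset (List ℕ)
  | .node ts => insert [] (childVerts ts 0)
  termination_by t => sizeOf t

def childVerts : List RTree → ℕ → Finset (List ℕ)
  | [], _ => ∅
  | t :: ts, i => (vertexFinset t).image (List.cons i) ∪ childVerts ts (i + 1)
  termination_by l _ => sizeOf l
end

mutual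
/-- The subtree rooted at a given vertex address, if the address is valid. -/
def subtreeAt : RTree → List ℕ → Option RTree
  | t, [] => some t
  | .node ts, i :: l => subtreeAtAux ts i l
  termination_by t _ => sizeOf t

def subtreeAtAux : List RTree → ℕ → List ℕ → Option RTree
  | [], _, _ => none
  | t :: _, 0, l => subtreeAt t l
  | _ :: ts, i + 1, l => subtreeAtAux ts i l
  termination_by l _ _ => sizeOf l
end

/-- Whether a tree consists of a single vertex (i.e. its root is a leaf). -/
def isLeafTree : RTree → Bool
  | .node [] => true
  | .node (_ :: _) => false

/-- The set of (addresses of) leaves of a rooted tree: vertices with no children. -/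
def leafFinset (t : RTree) : Finset (List ℕ) :=
  (vertexFinset t).filter (fun l => (subtreeAt t l).any isLeafTree = true)

/-- The set of all prefixes of an address: the set of vertices of the path from the root
to the vertex with this address. -/
def prefixFinset (l : List ℕ) : Finset (List ℕ) :=
  (Finset.range (l.length + 1)).image (fun k => l.take k)

end RTree

namespace RTree

/-- Pass a distinguished address into the `i`-th child: `some (j :: rest)` becomes
`some rest` when `j = i` and `none` otherwise. -/
def childAddr (l : Option (List ℕ)) (i : ℕ) : Option (List ℕ) :=
  match l with
  | some (j :: rest) => if j = i then some rest else none
  | _ => none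

mutual
/-- The bivariate tree polynomial `p_{v_*}[𝒯](x, y) ∈ (ℤ[x])[y]` with a distinguished
leaf address: the distinguished leaf is initialised with `y` (the outer variable `X`),
every other leaf with `x` (the constant `C X`), and
`p_{v_*}[w] = x (1 − ∏ᵢ (1 − p_{v_*}[wᵢ]))` at a vertex `w` with children `w₁, …, wᵣ`. -/
noncomputable def treePoly2 : RTree → Option (List ℕ) → Polynomial (Polynomial ℤ)
  | .node [], l => if l = some [] then Polynomial.X else Polynomial.C Polynomial.X
  | .node (t :: ts), l => Polynomial.C Polynomial.X * (1 - prodPoly2 (t :: ts) l 0)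
  termination_by t _ => sizeOf t

noncomputable def prodPoly2 : List RTree → Option (List ℕ) → ℕ → Polynomial (Polynomial ℤ)
  | [], _, _ => 1
  | t :: ts, l, i => (1 - treePoly2 t (childAddr l i)) * prodPoly2 ts l (i + 1)
  termination_by ts _ _ => sizeOf ts
end

end RTree

namespace RTree

open Polynomial

mutual
theorem plain_tree (t : RTree) : ∃ q : Polynomial ℤ, treePoly2 t none = C q ∧
    ∀ x : ℝ, 0 ≤ x → x ≤ 1 → 0 ≤ aeval x q ∧ aeval x q ≤ 1 ∧ (0 < x → 0 < aeval x q) := by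
  match t with
  | .node [] =>
    refine ⟨X, by simp [treePoly2], fun x h0 h1 => ?_⟩
    simp [h0, h1]
  | .node (t :: ts) =>
    obtain ⟨q, hq, hx⟩ := plain_list (t :: ts) none 0 (fun j _ => rfl)
    refine ⟨X * (1 - q), by rw [treePoly2, hq]; simp, fun x h0 h1 => ?_⟩
    obtain ⟨h2, h3, h4⟩ := hx x h0 h1
    simp only [map_mul, map_sub, map_one, aeval_X]
    refine ⟨mul_nonneg h0 (by linarith), mul_le_one₀ h1 (by linarith) (by linarith), fun h => ?_⟩
    exact mul_pos h (by linarith [h4 h (by simp)])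
  termination_by sizeOf t

theorem plain_list (ts : List RTree) (l : Option (List ℕ)) (i : ℕ)
    (h : ∀ j, i ≤ j → childAddr l j = none) : ∃ q : Polynomial ℤ, prodPoly2 ts l i = C q ∧
    ∀ x : ℝ, 0 ≤ x → x ≤ 1 → 0 ≤ aeval x q ∧ aeval x q ≤ 1 ∧
      (0 < x → ts ≠ [] → aeval x q < 1) := by
  match ts with
  | [] => exact ⟨1, by simp [prodPoly2], fun x h0 h1 => by simp⟩
  | t :: ts =>
    obtain ⟨p, hp, hpx⟩ := plain_tree t
    obtain ⟨q, hq, hqx⟩ := plain_list ts l (i + 1) (fun j hj => h j (by omega))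
    refine ⟨(1 - p) * q, by rw [prodPoly2, hq, h i le_rfl, hp]; simp, fun x h0 h1 => ?_⟩
    obtain ⟨a1, a2, a3⟩ := hpx x h0 h1
    obtain ⟨b1, b2, b3⟩ := hqx x h0 h1
    simp only [map_mul, map_sub, map_one]
    refine ⟨mul_nonneg (by linarith) b1, mul_le_one₀ (by linarith) b1 b2, fun hx _ => ?_⟩
    have := a3 hx
    nlinarith
  termination_by sizeOf ts
end

mutual
theorem dist_tree (t : RTree) (v : List ℕ) (hv : (subtreeAt t v).any isLeafTree = true) :
    ∃ a b : Polynomial ℤ, treePoly2 t (some v) = C a * X + C b ∧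
    (∀ x : ℝ, 0 ≤ x → x ≤ 1 → 0 ≤ aeval x a ∧ aeval x a ≤ 1) ∧
    ((∀ x : ℝ, 0 ≤ x → x ≤ 1 → aeval x a < 1) ∨
      ∀ w, (subtreeAt t w).any isLeafTree = true → w = v) := by
  match t, v with
  | .node [], [] =>
    refine ⟨1, 0, by simp [treePoly2], by simp, Or.inr ?_⟩
    intro w hw
    cases w with
    | nil => rfl
    | cons i l => simp [subtreeAt, subtreeAtAux] at hw
  | .node [], i :: l => simp [subtreeAt, subtreeAtAux] at hv
  | .node (t :: ts), [] => simp [subtreeAt, isLeafTree] at hv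
  | .node (t :: ts), i :: l =>
    rw [subtreeAt] at hv
    obtain ⟨a, b, hab, hx, hd⟩ := dist_list (t :: ts) i l 0 hv
    refine ⟨X * a, X * (1 - b), ?_, fun x h0 h1 => ?_, ?_⟩
    · rw [Nat.add_zero] at hab
      rw [treePoly2, hab]
      simp only [map_mul, map_sub, map_one]
      ring
    · obtain ⟨h2, h3⟩ := hx x h0 h1
      simp only [map_mul, aeval_X]
      exact ⟨mul_nonneg h0 h2, mul_le_one₀ h1 h2 h3⟩
    · rcases hd with hd | hd
      · left
        intro x h0 h1
        simp only [map_mul, aeval_X]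
        rcases h0.eq_or_lt with h | h
        · simp [← h]
        · have := hd x h h1
          have := hx x h0 h1
          nlinarith
      · right
        intro w hw
        cases w with
        | nil => simp [subtreeAt, isLeafTree] at hw
        | cons j m =>
          rw [subtreeAt] at hw
          obtain ⟨h1, h2⟩ := hd j m hw
          rw [h1, h2]
  termination_by sizeOf t

theorem dist_list (ts : List RTree) (i : ℕ) (v : List ℕ) (k : ℕ)
    (hv : (subtreeAtAux ts i v).any isLeafTree = true) :
    ∃ a b : Polynomial ℤ, prodPoly2 ts (some ((i + k) :: v)) k = C b - C a * X ∧
    (∀ x : ℝ, 0 ≤ x → x ≤ 1 → 0 ≤ aeval x a ∧ aeval x a ≤ 1) ∧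
    ((∀ x : ℝ, 0 < x → x ≤ 1 → aeval x a < 1) ∨
      ∀ j w, (subtreeAtAux ts j w).any isLeafTree = true → j = i ∧ w = v) := by
  match ts, i with
  | [], i => simp [subtreeAtAux] at hv
  | t :: ts, 0 =>
    rw [subtreeAtAux] at hv
    obtain ⟨a, b, hab, hx, hd⟩ := dist_tree t v hv
    obtain ⟨q, hq, hqx⟩ := plain_list ts (some ((0 + k) :: v)) (k + 1) (fun j hj => by
      simp only [childAddr]
      rw [if_neg (by omega)])
    refine ⟨a * q, (1 - b) * q, ?_, fun x h0 h1 => ?_, ?_⟩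
    · rw [prodPoly2, hq]
      simp only [childAddr, Nat.zero_add, if_true, hab, map_mul, map_sub, map_one]
      ring
    · obtain ⟨h2, h3⟩ := hx x h0 h1
      obtain ⟨h4, h5, h6⟩ := hqx x h0 h1
      simp only [map_mul]
      exact ⟨mul_nonneg h2 h4, mul_le_one₀ h3 h4 h5⟩
    · by_cases hts : ts = []
      · rcases hd with hd | hd
        · left
          intro x h0 h1
          have := hd x h0.le h1
          have := hx x h0.le h1
          have := hqx x h0.le h1
          simp only [map_mul]
          nlinarith
        · right
          intro j w hw
          subst hts
          cases j with
          | zero => rw [subtreeAtAux] at hw; exact ⟨rfl, hd w hw⟩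
          | succ j => simp [subtreeAtAux] at hw
      · left
        intro x h0 h1
        have := hx x h0.le h1
        obtain ⟨h4, h5, h6⟩ := hqx x h0.le h1
        have := h6 h0 hts
        simp only [map_mul]
        nlinarith
  | t :: ts, i + 1 =>
    rw [subtreeAtAux] at hv
    obtain ⟨a, b, hab, hx, hd⟩ := dist_list ts i v (k + 1) hv
    obtain ⟨p, hp, hpx⟩ := plain_tree t
    have hc : childAddr (some ((i + 1 + k) :: v)) k = none := by
      simp only [childAddr]
      rw [if_neg (by omega)]
    refine ⟨(1 - p) * a, (1 - p) * b, ?_, fun x h0 h1 => ?_, Or.inl fun x h0 h1 => ?_⟩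
    · rw [prodPoly2, hc, hp, show i + 1 + k = i + (k + 1) by omega, hab]
      simp only [map_mul, map_sub, map_one]
      ring
    · obtain ⟨h2, h3⟩ := hx x h0 h1
      obtain ⟨h4, h5, h6⟩ := hpx x h0 h1
      simp only [map_mul, map_sub, map_one]
      exact ⟨mul_nonneg (by linarith) h2, mul_le_one₀ (by linarith) h2 h3⟩
    · obtain ⟨h2, h3⟩ := hx x h0.le h1
      obtain ⟨h4, h5, h6⟩ := hpx x h0.le h1
      have := h6 h0
      simp only [map_mul, map_sub, map_one]
      nlinarith
  termination_by sizeOf ts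
end

end RTree

/-- For a rooted tree `𝒯` with distinguished leaf `v_*`, the bivariate
polynomial `p_{v_*}[𝒯](x,y)` has the form `a₁(x) y + a₂(x)` with `a₁, a₂ ∈ ℤ[x]`; if `𝒯`
has at least two leaves then `sup_{x ∈ [0,1]} |a₁(x)| < 1`, and consequently the map
`A : C[0,1] → C[0,1]`, `A(f)(x) = a₁(x) f(x) + a₂(x)`, is a strict contraction for the
maximum norm. -/
theorem stmt9 (t : RTree) (vstar : List ℕ) (hv : vstar ∈ RTree.leafFinset t) :
    (RTree.treePoly2 t (some vstar)
        = Polynomial.C ((RTree.treePoly2 t (some vstar)).coeff 1) * Polynomial.X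
          + Polynomial.C ((RTree.treePoly2 t (some vstar)).coeff 0)) ∧
    (2 ≤ (RTree.leafFinset t).card →
      (∃ c : ℝ, c < 1 ∧ ∀ x ∈ Set.Icc (0 : ℝ) 1,
          |Polynomial.aeval x ((RTree.treePoly2 t (some vstar)).coeff 1)| ≤ c) ∧
      ∃ c : NNReal, c < 1 ∧ LipschitzWith c
        (fun f : C(Set.Icc (0 : ℝ) 1, ℝ) =>
          ContinuousMap.mk
            (fun x : Set.Icc (0 : ℝ) 1 => Polynomial.aeval (x : ℝ) ((RTree.treePoly2 t (some vstar)).coeff 1)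
                * f x
              + Polynomial.aeval (x : ℝ) ((RTree.treePoly2 t (some vstar)).coeff 0))
            (((((RTree.treePoly2 t (some vstar)).coeff 1).continuous_aeval.comp
                  continuous_subtype_val).mul f.continuous).add
              ((((RTree.treePoly2 t (some vstar)).coeff 0).continuous_aeval.comp
                  continuous_subtype_val))))) := by
  obtain ⟨a, b, hab, hx, hd⟩ := RTree.dist_tree t vstar (Finset.mem_filter.mp hv).2
  have h1 : (RTree.treePoly2 t (some vstar)).coeff 1 = a := by
    rw [hab]; simp [Polynomial.coeff_C]
  have h0 : (RTree.treePoly2 t (some vstar)).coeff 0 = b := by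
    rw [hab]; simp
  simp only [h1, h0]
  refine ⟨hab, fun hcard => ?_⟩
  have hlt : ∀ x : ℝ, 0 ≤ x → x ≤ 1 → Polynomial.aeval x a < 1 := by
    rcases hd with hd | hd
    · exact hd
    · exfalso
      have hsub : RTree.leafFinset t ⊆ {vstar} := fun w hw =>
        Finset.mem_singleton.mpr (hd w (Finset.mem_filter.mp hw).2)
      have := Finset.card_le_card hsub
      simp only [Finset.card_singleton] at this
      omega
  obtain ⟨x0, hx0, hmax⟩ := (isCompact_Icc (a := (0 : ℝ)) (b := 1)).exists_isMaxOn
    ⟨0, by simp⟩ (f := fun x : ℝ => Polynomial.aeval x a) (a.continuous_aeval).continuousOn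
  have hb : ∀ x ∈ Set.Icc (0 : ℝ) 1, |Polynomial.aeval x a| ≤ Polynomial.aeval x0 a := by
    intro x hxm
    rw [abs_of_nonneg (hx x hxm.1 hxm.2).1]
    exact hmax hxm
  obtain ⟨hl, hr⟩ := Set.mem_Icc.mp hx0
  have hn := (hx x0 hl hr).1
  refine ⟨⟨_, hlt x0 hl hr, hb⟩, ⟨Polynomial.aeval x0 a, hn⟩, hlt x0 hl hr, ?_⟩
  refine LipschitzWith.of_dist_le_mul fun f g => ?_
  refine (ContinuousMap.dist_le (mul_nonneg (NNReal.coe_nonneg _) dist_nonneg)).mpr fun x => ?_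
  simp only [ContinuousMap.coe_mk, dist_add_right, NNReal.coe_mk]
  rw [Real.dist_eq, ← mul_sub, abs_mul]
  exact mul_le_mul (hb x x.2) (by rw [← Real.dist_eq]; exact ContinuousMap.dist_apply_le_dist x)
    (abs_nonneg _) (hx x0 hx0.1 hx0.2).1
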